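/- arXiv:2311.00185 — 2 statements merged into one kernel-verified Lean document; each statement's English description precedes it below -/
import Mathlib

section
/- Let P := conv({(0,0,0), (1,0,0), (0,1,1), (1,1,1), (0,0,1/2), (1/2,0,1), (1,1/2,1)}) ⊆ [0,1]^3. Then T^2(P) = P_I = {x ∈ [0,1]^3 : x_2 = x_3}, and there exists x̄ ∈ B^2(P) with x̄_3 > x̄_2; in particular T^2(P) ⊊ B^2(P). -/
open Set

def cube (n : ℕ) : Set (Fin n → ℝ) := {x | ∀ i, 0 ≤ x i ∧ x i ≤ 1}

def corners (n : ℕ) : Set (Fin n → ℝ) := {x | ∀ i, x i = 0 ∨ x i = 1}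

def integerHull (n : ℕ) (P : Set (Fin n → ℝ)) : Set (Fin n → ℝ) :=
  convexHull ℝ (P ∩ corners n)

/-- `R_k(P)`: the family of branch-and-bound relaxations of `P` of height at most `k`. -/
def Rk (n : ℕ) : ℕ → Set (Fin n → ℝ) → Set (Set (Fin n → ℝ))
  | 0, P => {P}
  | k + 1, P => {P} ∪ {Q | ∃ j : Fin n, ∃ A ∈ Rk n k (P ∩ {x | x j = 0}),
      ∃ B ∈ Rk n k (P ∩ {x | x j = 1}), Q = convexHull ℝ (A ∪ B)}

/-- The height-`k` branch-and-bound operator `T^k`. -/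
def Tk (n k : ℕ) (P : Set (Fin n → ℝ)) : Set (Fin n → ℝ) :=
  ⋂ Q ∈ Rk n k P, Q

/-- The Balas–Ceria–Cornuéjols operator `B^k`. -/
def Bk (n k : ℕ) (P : Set (Fin n → ℝ)) : Set (Fin n → ℝ) :=
  ⋂ S ∈ {S : Finset (Fin n) | S.card = k},
    convexHull ℝ {x ∈ P | ∀ j ∈ S, x j = 0 ∨ x j = 1}

/-!
A branch-and-bound tree may branch on different coordinates in different subtrees. For the polytope
of the theorem, branching first on `x 0`, then on `x 2` where `x 0 = 0` and on `x 1` where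
`x 0 = 1`, leaves only corners, so the relaxation of this single tree is already the integer hull.
In contrast, `B^2` fixes the same two coordinates everywhere: for each pair of coordinates, one of
the three fractional vertices is integral on the pair and survives, and a point slightly above the
integer hull can be reached from it in all three cases.
-/

/-- Height-`k` branch and bound solves `P` exactly: some branch-and-bound tree of height at most `k`
has its relaxation inside the integer hull of `P`. -/
def HasExactTree {n : ℕ} (k : ℕ) (P : Set (Fin n → ℝ)) : Prop :=
  ∃ Q ∈ Rk n k P, Q ⊆ integerHull n P

/-- The convex hull of the points of `P` whose coordinates in `S` are `0` or `1`; the operator `B^k`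
intersects these over all `S` of size `k`. -/
def mixedIntegerHull {n : ℕ} (S : Finset (Fin n)) (P : Set (Fin n → ℝ)) : Set (Fin n → ℝ) :=
  convexHull ℝ {x ∈ P | ∀ j ∈ S, x j = 0 ∨ x j = 1}

section General

variable {n k : ℕ} {P Q : Set (Fin n → ℝ)}

theorem integerHull_subset (hP : Convex ℝ P) : integerHull n P ⊆ P :=
  convexHull_min inter_subset_left hP

theorem integerHull_eq_convexHull_union (j : Fin n) (P : Set (Fin n → ℝ)) :
    integerHull n P =
      convexHull ℝ (integerHull n (P ∩ {x | x j = 0}) ∪ integerHull n (P ∩ {x | x j = 1})) := by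
  have hsplit : P ∩ corners n =
      P ∩ {x | x j = 0} ∩ corners n ∪ P ∩ {x | x j = 1} ∩ corners n := by
    rw [← union_inter_distrib_right, ← inter_union_distrib_left, inter_assoc]
    exact congrArg (P ∩ ·) (inter_eq_right.2 fun (x : Fin n → ℝ) (hx : x ∈ corners n) => hx j).symm
  simp only [integerHull, convexHull_convexHull_union_left, convexHull_convexHull_union_right,
    hsplit]

theorem integerHull_subset_of_mem_Rk (hP : Convex ℝ P) (hQ : Q ∈ Rk n k P) :
    integerHull n P ⊆ Q := by
  induction k generalizing P Q with
  | zero =>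
    obtain rfl : Q = P := hQ
    exact integerHull_subset hP
  | succ k ih =>
    obtain (rfl : Q = P) | ⟨j, A, hA, B, hB, rfl⟩ := hQ
    · exact integerHull_subset hP
    · have hface (c : ℝ) : Convex ℝ (P ∩ {x | x j = c}) :=
        hP.inter (convex_hyperplane (LinearMap.proj (R := ℝ) (φ := fun _ => ℝ) j).isLinear c)
      rw [integerHull_eq_convexHull_union j]
      exact convexHull_mono (union_subset_union (ih (hface 0) hA) (ih (hface 1) hB))

theorem integerHull_subset_Tk (hP : Convex ℝ P) : integerHull n P ⊆ Tk n k P :=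
  subset_iInter₂ fun _ => integerHull_subset_of_mem_Rk hP

namespace HasExactTree

theorem of_subset_corners (hP : P ⊆ corners n) : HasExactTree 0 P :=
  ⟨P, rfl, (subset_inter Subset.rfl hP).trans (subset_convexHull ℝ _)⟩

theorem branch (j : Fin n) (h₀ : HasExactTree k (P ∩ {x | x j = 0}))
    (h₁ : HasExactTree k (P ∩ {x | x j = 1})) : HasExactTree (k + 1) P := by
  obtain ⟨A, hA, hA'⟩ := h₀
  obtain ⟨B, hB, hB'⟩ := h₁
  refine ⟨convexHull ℝ (A ∪ B), Or.inr ⟨j, A, hA, B, hB, rfl⟩, ?_⟩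
  rw [integerHull_eq_convexHull_union j]
  exact convexHull_mono (union_subset_union hA' hB')

theorem Tk_eq_integerHull (h : HasExactTree k P) (hP : Convex ℝ P) :
    Tk n k P = integerHull n P := by
  obtain ⟨Q, hQ, hQP⟩ := h
  exact ((biInter_subset_of_mem hQ).trans hQP).antisymm (integerHull_subset_Tk hP)

end HasExactTree

theorem integerHull_subset_mixedIntegerHull (S : Finset (Fin n)) (P : Set (Fin n → ℝ)) :
    integerHull n P ⊆ mixedIntegerHull S P :=
  convexHull_mono fun _ hx => ⟨hx.1, fun j _ => hx.2 j⟩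

theorem integerHull_subset_Bk (k : ℕ) (P : Set (Fin n → ℝ)) : integerHull n P ⊆ Bk n k P :=
  subset_iInter₂ fun S _ => integerHull_subset_mixedIntegerHull S P

theorem segment_subset_mixedIntegerHull {S : Finset (Fin n)} {y v : Fin n → ℝ}
    (hy : y ∈ integerHull n P) (hv : v ∈ P) (hvS : ∀ j ∈ S, v j = 0 ∨ v j = 1) :
    segment ℝ y v ⊆ mixedIntegerHull S P :=
  (convex_convexHull ℝ _).segment_subset (integerHull_subset_mixedIntegerHull S P hy)
    (subset_convexHull ℝ _ ⟨hv, hvS⟩)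

theorem mem_Bk_of_forall_compl_singleton {P : Set (Fin (n + 1) → ℝ)} {x : Fin (n + 1) → ℝ}
    (hx : ∀ i, x ∈ mixedIntegerHull {i}ᶜ P) : x ∈ Bk (n + 1) n P := by
  refine mem_iInter₂.2 fun S (hS : S.card = n) => ?_
  obtain ⟨i, hi⟩ : ∃ i, Sᶜ = {i} := by
    rw [← Finset.card_eq_one, Finset.card_compl, Fintype.card_fin, hS, Nat.add_sub_cancel_left]
  exact compl_eq_comm.1 hi ▸ hx i

theorem corners_eq_pi (n : ℕ) : corners n = univ.pi fun _ => {0, 1} := by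
  ext x
  simp [corners]

theorem cube_eq_pi (n : ℕ) : cube n = univ.pi fun _ => Icc 0 1 := by
  ext x
  simp only [cube, mem_ofPred_eq, mem_univ_pi, mem_Icc]

theorem convexHull_corners (n : ℕ) : convexHull ℝ (corners n) = cube n := by
  simp only [corners_eq_pi, cube_eq_pi, convexHull_pi, convexHull_pair,
    segment_eq_Icc zero_le_one]

theorem convex_cube (n : ℕ) : Convex ℝ (cube n) :=
  convexHull_corners n ▸ convex_convexHull ℝ _

theorem image_funLeft_update_id_pi {ι M : Type*} (R : Type*) [DecidableEq ι] [Semiring R]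
    [AddCommMonoid M] [Module R M] (i j : ι) (s : Set M) :
    LinearMap.funLeft R M (Function.update id i j) '' (univ.pi fun _ => s) =
      (univ.pi fun _ => s) ∩ {x | x i = x j} := by
  refine Subset.antisymm ?_ fun x ⟨hx, hij⟩ => ⟨x, hx, ?_⟩
  · rintro _ ⟨x, hx, rfl⟩
    refine ⟨fun l _ => hx (Function.update id i j l) trivial, ?_⟩
    by_cases hij : j = i <;> simp [hij, LinearMap.funLeft_apply]
  · ext l
    by_cases hl : l = i <;> simp [hl, LinearMap.funLeft_apply, hij.out]

-- `x ↦ x ∘ Function.update id i j` is a linear retraction onto `x i = x j` which preserves the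
-- corners and the cube, so the general case follows from `convexHull_corners`.
theorem convexHull_corners_inter_eq (i j : Fin n) :
    convexHull ℝ (corners n ∩ {x | x i = x j}) = cube n ∩ {x | x i = x j} := by
  rw [corners_eq_pi, ← image_funLeft_update_id_pi ℝ, ← LinearMap.image_convexHull, ← corners_eq_pi,
    convexHull_corners, cube_eq_pi, image_funLeft_update_id_pi]

theorem convexHull_subset_dotProduct_le {ι 𝕜 : Type*} [Fintype ι] [Field 𝕜] [LinearOrder 𝕜]
    [IsStrictOrderedRing 𝕜] {s : Set (ι → 𝕜)} {a : ι → 𝕜} {b : 𝕜} (hs : ∀ v ∈ s, a ⬝ᵥ v ≤ b) :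
    convexHull 𝕜 s ⊆ {x | a ⬝ᵥ x ≤ b} :=
  convexHull_min hs (convex_halfSpace_le (dotProductBilin 𝕜 𝕜 a).isLinear b)

end General

/-- The polytope of the example, whose second-level relaxations `T^2` and `B^2` differ. -/
def gapPolytope : Set (Fin 3 → ℝ) :=
  convexHull ℝ
    {![0, 0, 0], ![1, 0, 0], ![0, 1, 1], ![1, 1, 1],
      ![0, 0, 1 / 2], ![1 / 2, 0, 1], ![1, 1 / 2, 1]}

theorem convex_gapPolytope : Convex ℝ gapPolytope :=
  convex_convexHull ℝ _

theorem gapPolytope_subset_cube : gapPolytope ⊆ cube 3 := by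
  refine convexHull_min ?_ (convex_cube 3)
  simp [insert_subset_iff, cube, Fin.forall_fin_succ, inv_le_one₀]

theorem gapPolytope_inequalities {x : Fin 3 → ℝ} (hx : x ∈ gapPolytope) :
    x 1 ≤ x 2 ∧ 2 * x 2 ≤ 1 + x 1 + 2 * x 0 ∧ x 2 ≤ 2 * x 1 + 2 * (1 - x 0) := by
  have h₁ : ![0, 1, -1] ⬝ᵥ x ≤ 0 :=
    convexHull_subset_dotProduct_le (by norm_num [Matrix.vec3_dotProduct]) hx
  have h₂ : ![-2, -1, 2] ⬝ᵥ x ≤ 1 :=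
    convexHull_subset_dotProduct_le (by norm_num [Matrix.vec3_dotProduct]) hx
  have h₃ : ![2, -2, 1] ⬝ᵥ x ≤ 2 :=
    convexHull_subset_dotProduct_le (by norm_num [Matrix.vec3_dotProduct]) hx
  simp only [Matrix.vec3_dotProduct, Matrix.cons_val] at h₁ h₂ h₃
  refine ⟨?_, ?_, ?_⟩ <;> linarith

theorem gapPolytope_inter_corners : gapPolytope ∩ corners 3 = corners 3 ∩ {x | x 1 = x 2} := by
  ext x
  refine ⟨fun ⟨hx, hc⟩ => ⟨hc, ?_⟩, fun ⟨hc, h⟩ => ⟨subset_convexHull ℝ _ ?_, hc⟩⟩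
  · obtain ⟨h₁, h₂, h₃⟩ := gapPolytope_inequalities hx
    rcases hc 0 with e₀ | e₀ <;> rcases hc 1 with e₁ | e₁ <;> rcases hc 2 with e₂ | e₂ <;>
      simp only [mem_ofPred_eq] <;> linarith
  · have hx : x = ![x 0, x 2, x 2] := by ext i; fin_cases i <;> simp [← h.out]
    rcases hc 0 with e₀ | e₀ <;> rcases hc 2 with e₂ | e₂ <;> rw [hx, e₀, e₂] <;> simp

theorem integerHull_gapPolytope : integerHull 3 gapPolytope = cube 3 ∩ {x | x 1 = x 2} := by
  rw [integerHull, gapPolytope_inter_corners, convexHull_corners_inter_eq]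

theorem hasExactTree_two_gapPolytope : HasExactTree 2 gapPolytope := by
  refine .branch 0
    (.branch 2 (.of_subset_corners ?_) (.of_subset_corners ?_))
    (.branch 1 (.of_subset_corners ?_) (.of_subset_corners ?_)) <;>
    rintro x ⟨⟨hx, h₀ : x 0 = _⟩, h : _ = _⟩ <;>
    obtain ⟨hle, hle₀, hle₁⟩ := gapPolytope_inequalities hx <;>
    have hcube := gapPolytope_subset_cube hx
  · have h₁ : x 1 = 0 := by linarith [hcube 1]
    simp [corners, Fin.forall_fin_succ, h₀, h₁, h]
  · have h₁ : x 1 = 1 := by linarith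
    simp [corners, Fin.forall_fin_succ, h₀, h₁, h]
  · have h₂ : x 2 = 0 := by linarith
    simp [corners, Fin.forall_fin_succ, h₀, h, h₂]
  · have h₂ : x 2 = 1 := by linarith [hcube 2]
    simp [corners, Fin.forall_fin_succ, h₀, h, h₂]

/-- A point of `B^2` of `gapPolytope` that lies strictly above the plane `x 1 = x 2` containing the
integer hull. -/
noncomputable def gapPoint : Fin 3 → ℝ :=
  ![1 / 2, 1 / 2, 5 / 8]

theorem gapPoint_one_lt_gapPoint_two : gapPoint 1 < gapPoint 2 := by
  simp only [gapPoint, Matrix.cons_val]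
  norm_num

theorem gapPoint_notMem_integerHull : gapPoint ∉ integerHull 3 gapPolytope := by
  rw [integerHull_gapPolytope]
  exact fun h => gapPoint_one_lt_gapPoint_two.ne h.2

theorem gapPoint_mem_Bk : gapPoint ∈ Bk 3 2 gapPolytope := by
  have hslice {a b : ℝ} (ha : a ∈ Icc 0 1) (hb : b ∈ Icc 0 1) :
      ![a, b, b] ∈ integerHull 3 gapPolytope := by
    rw [integerHull_gapPolytope]
    refine ⟨fun i => ?_, rfl⟩
    fin_cases i <;> assumption
  refine mem_Bk_of_forall_compl_singleton fun i => ?_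
  fin_cases i
  · refine segment_subset_mixedIntegerHull (y := ![1 / 2, 4 / 7, 4 / 7]) (v := ![1 / 2, 0, 1])
      (hslice (by norm_num) (by norm_num)) (subset_convexHull ℝ _ (by simp))
      (by simp [Fin.forall_fin_succ])
      ⟨7 / 8, 1 / 8, by norm_num, by norm_num, by norm_num, ?_⟩
    ext j
    fin_cases j <;> norm_num [gapPoint]
  · refine segment_subset_mixedIntegerHull (y := ![1 / 3, 1 / 2, 1 / 2]) (v := ![1, 1 / 2, 1])
      (hslice (by norm_num) (by norm_num)) (subset_convexHull ℝ _ (by simp))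
      (by simp [Fin.forall_fin_succ])
      ⟨3 / 4, 1 / 4, by norm_num, by norm_num, by norm_num, ?_⟩
    ext j
    fin_cases j <;> norm_num [gapPoint]
  · refine segment_subset_mixedIntegerHull (y := ![2 / 3, 2 / 3, 2 / 3]) (v := ![0, 0, 1 / 2])
      (hslice (by norm_num) (by norm_num)) (subset_convexHull ℝ _ (by simp))
      (by simp [Fin.forall_fin_succ])
      ⟨3 / 4, 1 / 4, by norm_num, by norm_num, by norm_num, ?_⟩
    ext j
    fin_cases j <;> norm_num [gapPoint]

theorem stmt16 (P : Set (Fin 3 → ℝ))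
    (hP : P = convexHull ℝ
      {![0, 0, 0], ![1, 0, 0], ![0, 1, 1], ![1, 1, 1],
       ![0, 0, 1 / 2], ![1 / 2, 0, 1], ![1, 1 / 2, 1]}) :
    Tk 3 2 P = integerHull 3 P ∧
    integerHull 3 P = {x ∈ cube 3 | x 1 = x 2} ∧
    (∃ xbar ∈ Bk 3 2 P, xbar 1 < xbar 2) ∧
    Tk 3 2 P ⊂ Bk 3 2 P := by
  obtain rfl : P = gapPolytope := hP
  have hT : Tk 3 2 gapPolytope = integerHull 3 gapPolytope :=
    hasExactTree_two_gapPolytope.Tk_eq_integerHull convex_gapPolytope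
  refine ⟨hT, integerHull_gapPolytope,
    ⟨gapPoint, gapPoint_mem_Bk, gapPoint_one_lt_gapPoint_two⟩, ?_⟩
  rw [hT]
  exact (integerHull_subset_Bk 2 gapPolytope).ssubset_of_mem_notMem gapPoint_mem_Bk
    gapPoint_notMem_integerHull
end

section
/- Let n ≥ 1, let P ⊆ [0,1]^n be a convex set, and let k ≥ 0. Then L^k(P) ⊆ T^k(P); equivalently, L^k(P) ⊆ Q for every Q ∈ R_k(P). -/
open Set

def Lop (n : ℕ) (P : Set (Fin n → ℝ)) : Set (Fin n → ℝ) :=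
  ⋂ i : Fin n, convexHull ℝ ((P ∩ {x | x i = 0}) ∪ (P ∩ {x | x i = 1}))

def Lk (n : ℕ) : ℕ → Set (Fin n → ℝ) → Set (Fin n → ℝ)
  | 0, P => P
  | k + 1, P => Lop n (Lk n k P)

/-!
When a point of a face `F` of a convex set is written as a convex combination of points of that set
with positive weights, all these points lie in `F`. Hence `conv S ∩ F ⊆ conv (S ∩ F)`, and so
`L^k(P) ∩ F ⊆ L^k(F)` for every face `F` of a convex set `P`. For `P ⊆ [0,1]^n` the sets
`P ∩ {x_j = 0}` and `P ∩ {x_j = 1}` are faces of `P`, whence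
`L^(k+1)(P) ⊆ conv (L^k(P ∩ {x_j = 0}) ∪ L^k(P ∩ {x_j = 1}))` for every branching variable `x_j`,
and the claim follows by induction on the height of the branch-and-bound tree.
-/

section Extreme

variable {𝕜 E M : Type*} [Semiring 𝕜] [PartialOrder 𝕜] [AddCommMonoid E] [Module 𝕜 E]
  [AddCommMonoid M] [Module 𝕜 M]

theorem isExtreme_inter_preimage {A : Set E} {B C : Set M} (hBC : IsExtreme 𝕜 B C) (f : E →ₗ[𝕜] M)
    (hf : MapsTo f A B) : IsExtreme 𝕜 A (A ∩ f ⁻¹' C) := by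
  refine ⟨inter_subset_left, fun x hx y hy z hz hzxy => ⟨hx, ?_⟩⟩
  obtain ⟨a, b, ha, hb, hab, rfl⟩ := hzxy
  exact hBC.left_mem_of_mem_openSegment (hf hx) (hf hy) hz.2 ⟨a, b, ha, hb, hab, by simp⟩

theorem convexHull_inter_subset_of_isExtreme [ZeroLEOneClass 𝕜] {A F S : Set E} (hA : Convex 𝕜 A)
    (hF : IsExtreme 𝕜 A F) (hS : S ⊆ A) : convexHull 𝕜 S ∩ F ⊆ convexHull 𝕜 (S ∩ F) := by
  let K : Set E := {x | x ∈ A ∧ (x ∈ F → x ∈ convexHull 𝕜 (S ∩ F))}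
  have hSK : S ⊆ K := fun x hx => ⟨hS hx, fun hxF => subset_convexHull 𝕜 _ ⟨hx, hxF⟩⟩
  have hK : Convex 𝕜 K := by
    refine convex_iff_openSegment_subset.2 fun x hx y hy z hz =>
      ⟨hA.openSegment_subset hx.1 hy.1 hz, fun hzF => ?_⟩
    have hxF : x ∈ F := hF.left_mem_of_mem_openSegment hx.1 hy.1 hzF hz
    have hyF : y ∈ F := hF.right_mem_of_mem_openSegment hx.1 hy.1 hzF hz
    exact (convex_convexHull 𝕜 _).openSegment_subset (hx.2 hxF) (hy.2 hyF) hz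
  exact fun x hx => (convexHull_min hSK hK hx.1).2 hx.2

end Extreme

section LiftAndProject

variable {n : ℕ} {P Q F : Set (Fin n → ℝ)}

theorem lop_mono (h : P ⊆ Q) : Lop n P ⊆ Lop n Q :=
  iInter_mono fun _ => convexHull_mono (by gcongr)

theorem convex_lop (P : Set (Fin n → ℝ)) : Convex ℝ (Lop n P) :=
  convex_iInter fun _ => convex_convexHull ℝ _

theorem lop_subset [NeZero n] (hP : Convex ℝ P) : Lop n P ⊆ P :=
  (iInter_subset _ 0).trans (convexHull_min (union_subset inter_subset_left inter_subset_left) hP)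

theorem lop_inter_subset_of_isExtreme (hQ : Convex ℝ Q) (hF : IsExtreme ℝ Q F) (hPQ : P ⊆ Q) :
    Lop n P ∩ F ⊆ Lop n (P ∩ F) := by
  rintro x ⟨hx, hxF⟩
  refine mem_iInter.2 fun i => ?_
  have hsub : (P ∩ {x | x i = 0}) ∪ (P ∩ {x | x i = 1}) ⊆ Q :=
    union_subset (inter_subset_left.trans hPQ) (inter_subset_left.trans hPQ)
  have hxi := convexHull_inter_subset_of_isExtreme hQ hF hsub ⟨mem_iInter.1 hx i, hxF⟩
  rwa [union_inter_distrib_right, inter_right_comm P _ F, inter_right_comm P _ F] at hxi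

theorem convex_lk (hP : Convex ℝ P) : ∀ k, Convex ℝ (Lk n k P)
  | 0 => hP
  | _ + 1 => convex_lop _

theorem lk_subset [NeZero n] (hP : Convex ℝ P) : ∀ k, Lk n k P ⊆ P
  | 0 => Subset.rfl
  | k + 1 => (lop_subset (convex_lk hP k)).trans (lk_subset hP k)

theorem lk_inter_subset_of_isExtreme [NeZero n] (hP : Convex ℝ P) (hF : IsExtreme ℝ P F) (k : ℕ) :
    Lk n k P ∩ F ⊆ Lk n k F := by
  induction k with
  | zero => exact inter_subset_right
  | succ k ih => exact (lop_inter_subset_of_isExtreme hP hF (lk_subset hP k)).trans (lop_mono ih)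

end LiftAndProject

section BranchAndBound

variable {n : ℕ} {P : Set (Fin n → ℝ)}

theorem isExtreme_inter_coord_eq (hP : P ⊆ cube n) (j : Fin n) {c : ℝ}
    (hc : c ∈ ({0, 1} : Set ℝ)) : IsExtreme ℝ P (P ∩ {x | x j = c}) := by
  have hc' : IsExtreme ℝ (Icc 0 1) {c} :=
    isExtreme_singleton.2 (by rwa [extremePoints_Icc zero_le_one])
  exact isExtreme_inter_preimage hc' (LinearMap.proj j) fun x hx => hP hx j

theorem lk_inter_coord_eq_subset [NeZero n] (hPcube : P ⊆ cube n) (hP : Convex ℝ P) (j : Fin n)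
    {c : ℝ} (hc : c ∈ ({0, 1} : Set ℝ)) (k : ℕ) :
    Lk n k P ∩ {x | x j = c} ⊆ Lk n k (P ∩ {x | x j = c}) := fun _ hx =>
  lk_inter_subset_of_isExtreme hP (isExtreme_inter_coord_eq hPcube j hc) k
    ⟨hx.1, lk_subset hP k hx.1, hx.2⟩

theorem lk_succ_subset_convexHull_union [NeZero n] (hPcube : P ⊆ cube n) (hP : Convex ℝ P)
    (j : Fin n) (k : ℕ) :
    Lk n (k + 1) P ⊆
      convexHull ℝ (Lk n k (P ∩ {x | x j = 0}) ∪ Lk n k (P ∩ {x | x j = 1})) :=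
  (iInter_subset _ j).trans <| convexHull_mono <| union_subset_union
    (lk_inter_coord_eq_subset hPcube hP j (by simp) k)
    (lk_inter_coord_eq_subset hPcube hP j (by simp) k)

theorem lk_subset_of_mem_rk [NeZero n] {k : ℕ} {Q : Set (Fin n → ℝ)} (hPcube : P ⊆ cube n)
    (hP : Convex ℝ P) (hQ : Q ∈ Rk n k P) : Lk n k P ⊆ Q := by
  induction k generalizing P Q with
  | zero => exact (mem_singleton_iff.1 hQ).superset
  | succ k ih =>
    have hface (j : Fin n) (c : ℝ) {A : Set (Fin n → ℝ)} (hA : A ∈ Rk n k (P ∩ {x | x j = c})) :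
        Lk n k (P ∩ {x | x j = c}) ⊆ A := by
      have hplane : Convex ℝ {x : Fin n → ℝ | x j = c} :=
        convex_hyperplane (f := fun x : Fin n → ℝ => x j) (LinearMap.proj j).isLinear c
      exact ih (inter_subset_left.trans hPcube) (hP.inter hplane) hA
    rcases hQ with rfl | ⟨j, A, hA, B, hB, rfl⟩
    · exact lk_subset hP (k + 1)
    · exact (lk_succ_subset_convexHull_union hPcube hP j k).trans
        (convexHull_mono (union_subset_union (hface j 0 hA) (hface j 1 hB)))

end BranchAndBound

theorem stmt17 (n : ℕ) (hn : 1 ≤ n) (P : Set (Fin n → ℝ)) (hPcube : P ⊆ cube n)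
    (hPconv : Convex ℝ P) (k : ℕ) :
    Lk n k P ⊆ Tk n k P ∧ ∀ Q ∈ Rk n k P, Lk n k P ⊆ Q := by
  have : NeZero n := NeZero.of_pos hn
  have h (Q) (hQ : Q ∈ Rk n k P) : Lk n k P ⊆ Q := lk_subset_of_mem_rk hPcube hPconv hQ
  exact ⟨subset_iInter₂ h, h⟩
end
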